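/- Let p > 1 with 1/p + 1/q = 1, and let f, g be two positive continuous functions on [0, ∞) such that for x > 0 the integrals I^{α,β,η,μ}_{x,k}[f^p], I^{α,β,η,μ}_{x,k}[g^p], I^{α,β,η,μ}_{x,k}[f^q] and I^{α,β,η,μ}_{x,k}[g^q] are finite. If 0 < m ≤ f(τ)/g(τ) ≤ M for all τ ∈ (0, x), then I^{α,β,η,μ}_{x,k}[f·g] ≤ (2^{p−1} M^p / (p(M+1)^p)) · I^{α,β,η,μ}_{x,k}[f^p + g^p] + (2^{q−1} / (q(m+1)^q)) · I^{α,β,η,μ}_{x,k}[f^q + g^q]. -/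

import Mathlib

/-!
On `(0, x)` the kernel is nonnegative: the parameter conditions make all three parameters of the
hypergeometric series positive and put its argument in `(0, 1)`, so every term is nonnegative.
It remains to integrate a pointwise inequality against the kernel. From `m ≤ f / g ≤ M` one gets
`f ≤ M / (M + 1) * (f + g)` and `g ≤ (f + g) / (m + 1)`; Young's inequality
`f g ≤ f ^ p / p + g ^ q / q` and the convexity bound
`(f + g) ^ r ≤ 2 ^ (r - 1) * (f ^ r + g ^ r)` for `r = p, q` then give the claim.
-/

open MeasureTheory Real Set

/-- The Gauss hypergeometric series `₂F₁(a, b; c; z)`. -/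
noncomputable def gauss2F1 (a b c z : ℝ) : ℝ :=
  ∑' n : ℕ, ((ascPochhammer ℝ n).eval a * (ascPochhammer ℝ n).eval b /
    ((ascPochhammer ℝ n).eval c * (n.factorial : ℝ))) * z ^ n

/-- The kernel `F(x, τ)` of the generalized k-fractional integral operator. -/
noncomputable def Fker (α β η μ k x τ : ℝ) : ℝ :=
  ((k + 1) ^ (μ + β + 1) * x ^ ((k + 1) * (-α - β - 2 * μ)) / Real.Gamma α) *
    τ ^ ((k + 1) * μ) * (x ^ (k + 1) - τ ^ (k + 1)) ^ (α - 1) *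
    gauss2F1 (α + β + μ) (-η) α (1 - (τ / x) ^ (k + 1))

/-- The generalized k-fractional integral operator `I^{α,β,η,μ}_{x,k}[f]`. -/
noncomputable def genKInt (α β η μ k x : ℝ) (f : ℝ → ℝ) : ℝ :=
  ∫ τ in (0:ℝ)..x, Fker α β η μ k x τ * τ ^ k * f τ

lemma gauss2F1_nonneg {a b c z : ℝ} (ha : 0 < a) (hb : 0 < b) (hc : 0 < c) (hz : 0 ≤ z) :
    0 ≤ gauss2F1 a b c z := by
  unfold gauss2F1
  refine tsum_nonneg fun n => ?_
  have h1 := ascPochhammer_pos n a ha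
  have h2 := ascPochhammer_pos n b hb
  have h3 := ascPochhammer_pos n c hc
  positivity

lemma Fker_nonneg {α β η μ k x τ : ℝ} (hk : 0 ≤ k) (hα : max 0 (-β - μ) < α) (hη : η < 0)
    (hτ : τ ∈ Ioo (0:ℝ) x) : 0 ≤ Fker α β η μ k x τ := by
  obtain ⟨h0, hx⟩ := hτ
  have hα0 : 0 < α := (le_max_left _ _).trans_lt hα
  have hα1 : -β - μ < α := (le_max_right _ _).trans_lt hα
  have hx0 : 0 < x := h0.trans hx
  have h1 : 0 ≤ x ^ (k + 1) - τ ^ (k + 1) :=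
    sub_nonneg.2 (Real.rpow_le_rpow h0.le hx.le (by linarith))
  have h2 : 0 ≤ 1 - (τ / x) ^ (k + 1) :=
    sub_nonneg.2 (Real.rpow_le_one (by positivity) ((div_le_one hx0).2 hx.le) (by linarith))
  have h3 := gauss2F1_nonneg (a := α + β + μ) (b := -η) (c := α) (by linarith) (by linarith) hα0 h2
  have h4 := Real.Gamma_pos_of_pos hα0
  unfold Fker
  have h5 := Real.rpow_nonneg h1 (α - 1)
  positivity

lemma rpow_le_of_le_mul_add {a b s c r : ℝ} (ha : 0 < a) (hb : 0 < b) (hs : 0 ≤ s) (hc : 0 ≤ c)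
    (hr : 1 ≤ r) (h : s ≤ c * (a + b)) :
    s ^ r / r ≤ 2 ^ (r - 1) * c ^ r / r * (a ^ r + b ^ r) := by
  have h1 : s ^ r ≤ c ^ r * (a + b) ^ r := by
    rw [← Real.mul_rpow hc (by positivity)]
    exact Real.rpow_le_rpow hs h (by linarith)
  have h2 : (a + b) ^ r ≤ 2 ^ (r - 1) * (a ^ r + b ^ r) := by
    lift a to NNReal using ha.le
    lift b to NNReal using hb.le
    exact_mod_cast NNReal.rpow_add_le_mul_rpow_add_rpow a b hr
  have h3 : c ^ r * (a + b) ^ r ≤ c ^ r * (2 ^ (r - 1) * (a ^ r + b ^ r)) := by gcongr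
  have hr0 : 0 < r := by linarith
  calc s ^ r / r ≤ (c ^ r * (2 ^ (r - 1) * (a ^ r + b ^ r))) / r := by
        gcongr; exact h1.trans h3
    _ = _ := by ring

lemma mul_le_young_minkowski {p q m M a b : ℝ} (hpq : p.HolderConjugate q) (hm : 0 < m)
    (ha : 0 < a) (hb : 0 < b) (h1 : m ≤ a / b) (h2 : a / b ≤ M) :
    a * b ≤ (2 ^ (p - 1) * M ^ p / (p * (M + 1) ^ p)) * (a ^ p + b ^ p) +
      (2 ^ (q - 1) / (q * (m + 1) ^ q)) * (a ^ q + b ^ q) := by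
  have hM : 0 < M := hm.trans_le (h1.trans h2)
  rw [le_div_iff₀ hb] at h1
  rw [div_le_iff₀ hb] at h2
  have ea := rpow_le_of_le_mul_add (c := M / (M + 1)) ha hb ha.le (by positivity) hpq.lt.le (by
    rw [div_mul_eq_mul_div, le_div_iff₀ (by positivity)]; nlinarith)
  have eb := rpow_le_of_le_mul_add (c := 1 / (m + 1)) ha hb hb.le (by positivity)
    hpq.symm.lt.le (by
      rw [div_mul_eq_mul_div, le_div_iff₀ (by positivity)]; nlinarith)
  have hy := Real.young_inequality_of_nonneg ha.le hb.le hpq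
  rw [Real.div_rpow hM.le (by positivity)] at ea
  rw [Real.div_rpow zero_le_one (by positivity), Real.one_rpow] at eb
  refine hy.trans ((add_le_add ea eb).trans_eq ?_)
  congr 2 <;> field_simp

theorem young_minkowski_type (α β η μ k x : ℝ)
    (hk : 0 ≤ k) (hα : max 0 (-β - μ) < α) (hβ : β < 1) (hμ : -1 < μ)
    (hη1 : β - 1 < η) (hη2 : η < 0) (hx : 0 < x) (p q m M : ℝ) (f g : ℝ → ℝ)
    (hfc : ContinuousOn f (Ici 0)) (hgc : ContinuousOn g (Ici 0))
    (hfpos : ∀ t ∈ Ici (0:ℝ), 0 < f t) (hgpos : ∀ t ∈ Ici (0:ℝ), 0 < g t)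
    (hp : 1 < p) (hpq : 1 / p + 1 / q = 1) (hm : 0 < m)
    (hfin_fp : IntervalIntegrable (fun τ => Fker α β η μ k x τ * τ ^ k * (f τ ^ p)) volume 0 x)
    (hfin_gp : IntervalIntegrable (fun τ => Fker α β η μ k x τ * τ ^ k * (g τ ^ p)) volume 0 x)
    (hfin_fq : IntervalIntegrable (fun τ => Fker α β η μ k x τ * τ ^ k * (f τ ^ q)) volume 0 x)
    (hfin_gq : IntervalIntegrable (fun τ => Fker α β η μ k x τ * τ ^ k * (g τ ^ q)) volume 0 x)
    (hbd : ∀ τ ∈ Ioo (0:ℝ) x, m ≤ f τ / g τ ∧ f τ / g τ ≤ M) :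
    genKInt α β η μ k x (fun τ => f τ * g τ) ≤
      (2 ^ (p - 1) * M ^ p / (p * (M + 1) ^ p)) * (genKInt α β η μ k x (fun τ => f τ ^ p + g τ ^ p)) +
        (2 ^ (q - 1) / (q * (m + 1) ^ q)) * (genKInt α β η μ k x (fun τ => f τ ^ q + g τ ^ q)) := by
  have hconj : p.HolderConjugate q :=
    Real.holderConjugate_iff.2 ⟨hp, by simpa only [one_div] using hpq⟩
  have hP : IntervalIntegrable (fun τ => Fker α β η μ k x τ * τ ^ k * (f τ ^ p + g τ ^ p))
      volume 0 x := by
    simpa only [mul_add] using hfin_fp.add hfin_gp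
  have hQ : IntervalIntegrable (fun τ => Fker α β η μ k x τ * τ ^ k * (f τ ^ q + g τ ^ q))
      volume 0 x := by
    simpa only [mul_add] using hfin_fq.add hfin_gq
  unfold genKInt
  rw [← intervalIntegral.integral_const_mul, ← intervalIntegral.integral_const_mul,
    ← intervalIntegral.integral_add (hP.const_mul _) (hQ.const_mul _)]
  have hint := (hP.const_mul (2 ^ (p - 1) * M ^ p / (p * (M + 1) ^ p))).add
    (hQ.const_mul (2 ^ (q - 1) / (q * (m + 1) ^ q)))
  rw [intervalIntegrable_iff_integrableOn_Ioo_of_le hx.le] at hint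
  rw [intervalIntegral.integral_of_le hx.le, intervalIntegral.integral_of_le hx.le,
    integral_Ioc_eq_integral_Ioo, integral_Ioc_eq_integral_Ioo]
  have hK : ∀ τ ∈ Ioo (0:ℝ) x, 0 ≤ Fker α β η μ k x τ * τ ^ k := fun τ hτ =>
    mul_nonneg (Fker_nonneg hk hα hη2 hτ) (Real.rpow_nonneg hτ.1.le k)
  -- A nonnegative integrand under an integrable one needs no integrability check of its own.
  refine integral_mono_of_nonneg ?_ hint ?_
  · filter_upwards [ae_restrict_mem measurableSet_Ioo] with τ hτ
    exact mul_nonneg (hK τ hτ) (mul_pos (hfpos τ hτ.1.le) (hgpos τ hτ.1.le)).le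
  · filter_upwards [ae_restrict_mem measurableSet_Ioo] with τ hτ
    have h := mul_le_mul_of_nonneg_left (mul_le_young_minkowski hconj hm (hfpos τ hτ.1.le)
      (hgpos τ hτ.1.le) (hbd τ hτ).1 (hbd τ hτ).2) (hK τ hτ)
    refine h.trans_eq ?_
    ring
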